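/- Let μ be an affinely irreducible self-similar measure on ℝ^d associated to a self-similar IFS Φ = {φ_a}_{a∈A} and a strictly positive probability vector (p_a)_{a∈A}. Then there exist a probability space (Ω, 𝒜, ℙ) and a family (μ_ω)_{ω∈Ω} of Borel probability measures on ℝ^d forming a disintegration of μ, and constants C₁, C₂, α > 0, such that: (i) μ(E) = ∫_Ω μ_ω(E) dℙ(ω) for every Borel set E ⊆ ℝ^d; (ii) for every ω ∈ Ω, every x in the support of μ_ω and every r > 0, μ_ω(B(x,2r)) ≤ C₁ μ_ω(B(x,r)); (iii) for every ω ∈ Ω, every x in the support of μ_ω, every affine subspace W ⊊ ℝ^d, every r with 0 < r ≤ 1 and every ε > 0, μ_ω(W^{(εr)} ∩ B(x,r)) ≤ C₂ ε^α μ_ω(B(x,r)). -/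

import Mathlib

noncomputable section
open MeasureTheory Metric Filter Topology

variable {E : Type*} [NormedAddCommGroup E] [NormedSpace ℝ E]

/-- `f` is a contraction with ratio `r ∈ (0,1)`. -/
def IsContractionWith (r : ℝ) (f : E → E) : Prop :=
  0 < r ∧ r < 1 ∧ ∀ x y, ‖f x - f y‖ ≤ r * ‖x - y‖

/-- `f` is a contracting similarity with ratio `r ∈ (0,1)`. -/
def IsSimilarityWith (r : ℝ) (f : E → E) : Prop :=
  0 < r ∧ r < 1 ∧ ∀ x y, ‖f x - f y‖ = r * ‖x - y‖

/-- A self-conformal IFS. -/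
def IsSelfConformalIFS {A : Type*} [Fintype A] (φ : A → E → E) : Prop :=
  2 ≤ Fintype.card A ∧
  (∀ a, ∃ r, IsContractionWith r (φ a)) ∧
  (∀ a, ContDiff ℝ 1 (φ a)) ∧
  (∀ a x, 0 < ‖fderiv ℝ (φ a) x‖ ∧ ∀ v, ‖fderiv ℝ (φ a) x v‖ = ‖fderiv ℝ (φ a) x‖ * ‖v‖) ∧
  (∃ H α₀ : ℝ, 0 < H ∧ 0 < α₀ ∧ ∀ a x y,
    |‖fderiv ℝ (φ a) x‖ - ‖fderiv ℝ (φ a) y‖| ≤ H * ‖x - y‖ ^ α₀) ∧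
  (∃ a₁ a₂ x₁ x₂, φ a₁ x₁ = x₁ ∧ φ a₂ x₂ = x₂ ∧ x₁ ≠ x₂)

/-- A self-similar IFS. -/
def IsSelfSimilarIFS {A : Type*} [Fintype A] (φ : A → E → E) : Prop :=
  2 ≤ Fintype.card A ∧
  (∀ a, ∃ r, IsSimilarityWith r (φ a)) ∧
  (∃ a₁ a₂ x₁ x₂, φ a₁ x₁ = x₁ ∧ φ a₂ x₂ = x₂ ∧ x₁ ≠ x₂)

/-- The IFS is affinely irreducible: no (nonempty) proper affine subspace is preserved. -/
def AffinelyIrreducible {A : Type*} (φ : A → E → E) : Prop :=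
  ¬ ∃ W : AffineSubspace ℝ E, (W : Set E).Nonempty ∧ W ≠ ⊤ ∧
      ∀ a, φ a '' (W : Set E) ⊆ (W : Set E)

/-- Closed `ε`-neighbourhood of an affine subspace. -/
def affNbhd (W : AffineSubspace ℝ E) (ε : ℝ) : Set E :=
  {y | Metric.infDist y (W : Set E) ≤ ε}

/-- topological support of a measure -/
def msupport [MeasurableSpace E] (μ : Measure E) : Set E :=
  {x | ∀ r : ℝ, 0 < r → 0 < μ (Metric.ball x r)}

/-- distance between two sets -/
def setDist (S T : Set E) : ℝ := sInf (Set.image2 dist S T)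

/-- map corresponding to a finite word (as a list) -/
def listMap {A : Type*} (φ : A → E → E) : List A → E → E
  | [] => id
  | a :: l => φ a ∘ listMap φ l

/-- map corresponding to the first `n` letters of an infinite word -/
def wordMap {A : Type*} (φ : A → E → E) : ℕ → (ℕ → A) → E → E
  | 0, _ => id
  | n + 1, a => φ (a 0) ∘ wordMap φ n (fun k => a (k + 1))

/-- set of `Ψ`-well-approximable vectors in `ℝ^d` -/
def WApprox (d : ℕ) (Ψ : ℕ → ℝ) : Set (EuclideanSpace ℝ (Fin d)) :=
  {x | {pq : (Fin d → ℤ) × ℕ | 0 < pq.2 ∧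
        ∀ i, |x i - (pq.1 i : ℝ) / (pq.2 : ℝ)| ≤ Ψ pq.2}.Infinite}

/-- set of singular vectors in `ℝ^d` -/
def Sing (d : ℕ) : Set (EuclideanSpace ℝ (Fin d)) :=
  {x | ∀ c : ℝ, 0 < c → ∃ T : ℝ, 0 < T ∧ ∀ t : ℝ, T ≤ t →
    ∃ q : ℕ, 0 < q ∧ (q : ℝ) < t ∧
      ∀ i, |(q : ℝ) * x i - round ((q : ℝ) * x i)| ≤ c * t ^ (-(1 : ℝ) / (d : ℝ))}

/-! ### Part 1: an abstract random Moran construction -/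

section Helpers

set_option linter.unusedSectionVars false

variable {V : Type*} [NormedAddCommGroup V] [InnerProductSpace ℝ V] [FiniteDimensional ℝ V]
  [MeasurableSpace V] [BorelSpace V]

/-- Data of a uniformly separated, uniformly non-planar Moran construction. -/
structure Moran (V U : Type*) [NormedAddCommGroup V] [InnerProductSpace ℝ V] [Fintype U] where
  f : U → V →ᵃ[ℝ] V
  r : U → ℝ
  R : ℝ
  δ : ℝ
  e : ℝ
  ν : U → U → ℝ
  r_pos : ∀ u, 0 < r u
  r_lt : ∀ u, r u < 1
  dist_f : ∀ u x y, dist (f u x) (f u y) = r u * dist x y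
  R_pos : 0 < R
  maps : ∀ u x, ‖x‖ ≤ R → ‖f u x‖ ≤ R
  ν_nonneg : ∀ i u, 0 ≤ ν i u
  ν_sum : ∀ i, ∑ u, ν i u = 1
  δ_pos : 0 < δ
  sep : ∀ i u v, u ≠ v → 0 < ν i u → 0 < ν i v → ∀ x y, ‖x‖ ≤ R → ‖y‖ ≤ R →
    δ ≤ dist (f u x) (f v y)
  e_pos : 0 < e
  nc : ∀ (i : U) (W : AffineSubspace ℝ V), (W : Set V).Nonempty → W ≠ ⊤ →
    ∃ u, 0 < ν i u ∧ ∀ x, ‖x‖ ≤ R → e < Metric.infDist (f u x) (W : Set V)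

/-- A family of measures self-similar w.r.t. the Moran data. -/
structure MoranFam {U : Type*} [Fintype U] (D : Moran V U) (Ω : Type*) where
  s : Ω → Ω
  i : Ω → U
  m : Ω → Measure V
  prob : ∀ ω, IsProbabilityMeasure (m ω)
  hK : ∀ ω, (m ω).real {x | D.R < ‖x‖} = 0
  self : ∀ ω S, MeasurableSet S →
    (m ω).real S = ∑ u, D.ν (i ω) u * (m (s ω)).real (D.f u ⁻¹' S)

namespace Moran

variable {U : Type*} [Fintype U] (D : Moran V U)

lemma inj (u : U) : Function.Injective (D.f u) := by
  intro x y h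
  have := D.dist_f u x y
  rw [h, dist_self] at this
  have h2 := D.r_pos u
  have : dist x y = 0 := by
    rcases mul_eq_zero.mp this.symm with h | h
    · linarith
    · exact h
  exact dist_eq_zero.mp this

lemma surj (u : U) : Function.Surjective (D.f u) := by
  have h := (AffineMap.linear_injective_iff (D.f u)).mpr (D.inj u)
  exact (AffineMap.linear_surjective_iff (D.f u)).mp (LinearMap.injective_iff_surjective.mp h)

lemma cont (u : U) : Continuous (D.f u) := (D.f u).continuous_of_finiteDimensional

lemma infDist_f (u : U) (W : AffineSubspace ℝ V) (hW : (W : Set V).Nonempty) (y : V) :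
    D.r u * Metric.infDist y ((W.comap (D.f u) : AffineSubspace ℝ V) : Set V)
      ≤ Metric.infDist (D.f u y) (W : Set V) := by
  refine (Metric.le_infDist hW).mpr ?_
  intro z hz
  obtain ⟨z', rfl⟩ := D.surj u z
  rw [D.dist_f]
  refine mul_le_mul_of_nonneg_left (Metric.infDist_le_dist_of_mem ?_) (D.r_pos u).le
  exact hz

lemma comap_nonempty (u : U) (W : AffineSubspace ℝ V) (hW : (W : Set V).Nonempty) :
    ((W.comap (D.f u) : AffineSubspace ℝ V) : Set V).Nonempty := by
  obtain ⟨z, hz⟩ := hW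
  obtain ⟨z', rfl⟩ := D.surj u z
  exact ⟨z', hz⟩

lemma comap_ne_top (u : U) (W : AffineSubspace ℝ V) (hW : W ≠ ⊤) :
    (W.comap (D.f u) : AffineSubspace ℝ V) ≠ ⊤ := by
  intro h
  apply hW
  rw [eq_top_iff]
  intro z _
  obtain ⟨z', rfl⟩ := D.surj u z
  have : z' ∈ (W.comap (D.f u) : AffineSubspace ℝ V) := by rw [h]; trivial
  exact this

lemma exists_consts [Nonempty U] : ∃ ρ rm κ : ℝ, 0 < rm ∧ rm < 1 ∧ 0 < ρ ∧ ρ < 1 ∧ 0 < κ ∧ κ < 1 ∧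
    (∀ u, rm ≤ D.r u) ∧ (∀ u, D.r u ≤ ρ) ∧ (∀ i u, 0 < D.ν i u → κ ≤ D.ν i u) := by
  obtain ⟨u1, h1⟩ := Finite.exists_min D.r
  obtain ⟨u2, h2⟩ := Finite.exists_max D.r
  obtain ⟨iu, h3⟩ := Finite.exists_min
    (fun q : U × U => if 0 < D.ν q.1 q.2 then D.ν q.1 q.2 else 1)
  refine ⟨D.r u2, D.r u1, (if 0 < D.ν iu.1 iu.2 then D.ν iu.1 iu.2 else 1) / 2,
    D.r_pos _, D.r_lt _, D.r_pos _, D.r_lt _, ?_, ?_, h1, h2, ?_⟩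
  · split_ifs with h
    · linarith
    · norm_num
  · split_ifs with h
    · have := Finset.single_le_sum (fun u _ => D.ν_nonneg iu.1 u) (Finset.mem_univ iu.2)
      rw [D.ν_sum] at this
      linarith
    · norm_num
  · intro i u hu
    have := h3 (i, u)
    simp only [hu, if_true] at this
    split_ifs at this ⊢ <;> linarith

end Moran

lemma measurableSet_affNbhd (W : AffineSubspace ℝ V) (t : ℝ) : MeasurableSet (affNbhd W t) :=
  (isClosed_le (Metric.continuous_infDist_pt _) continuous_const).measurableSet

namespace MoranFam

variable {U : Type*} [Fintype U] {D : Moran V U} {Ω : Type*} (F : MoranFam D Ω)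

lemma null_pre (ω : Ω) (u : U) (S : Set V) (h : ∀ x, ‖x‖ ≤ D.R → D.f u x ∉ S) :
    (F.m ω).real (D.f u ⁻¹' S) = 0 := by
  have := F.prob ω
  refine le_antisymm ?_ measureReal_nonneg
  rw [← F.hK ω]
  refine measureReal_mono ?_
  intro x hx
  by_contra hc
  exact h x (not_lt.mp hc) hx

lemma local_eq (ω : Ω) (u : U) (hu : 0 < D.ν (F.i ω) u) (x : V) (hx : ‖x‖ ≤ D.R) (S : Set V)
    (hS : MeasurableSet S) (hSb : S ⊆ Metric.ball (D.f u x) D.δ) :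
    (F.m ω).real S = D.ν (F.i ω) u * (F.m (F.s ω)).real (D.f u ⁻¹' S) := by
  rw [F.self ω S hS]
  refine Finset.sum_eq_single u ?_ (by simp)
  intro v _ hv
  rcases (D.ν_nonneg (F.i ω) v).eq_or_lt with h | h
  · rw [← h, zero_mul]
  · rw [F.null_pre, mul_zero]
    intro y hy hyS
    have h1 := D.sep _ v u hv h hu y x hy hx
    have h2 := hSb hyS
    rw [Metric.mem_ball] at h2
    linarith

lemma real_pos {ω : Ω} {x : V} (hx : x ∈ msupport (F.m ω)) {t : ℝ} (ht : 0 < t) :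
    0 < (F.m ω).real (Metric.ball x t) := by
  have := F.prob ω
  exact ENNReal.toReal_pos (hx t ht).ne' (measure_ne_top _ _)

lemma descend (ω : Ω) (x : V) (hx : x ∈ msupport (F.m ω)) :
    ∃ u x', 0 < D.ν (F.i ω) u ∧ ‖x'‖ ≤ D.R ∧ x = D.f u x' ∧ x' ∈ msupport (F.m (F.s ω)) := by
  have key : ∃ u x', 0 < D.ν (F.i ω) u ∧ ‖x'‖ ≤ D.R ∧ x = D.f u x' := by
    by_contra! hcon
    let T : Set V := ⋃ u ∈ {u | 0 < D.ν (F.i ω) u}, D.f u '' Metric.closedBall 0 D.R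
    have hT : IsClosed T := by
      refine Set.Finite.isClosed_biUnion (Set.toFinite _) ?_
      intro u _
      exact ((isCompact_closedBall 0 D.R).image (D.cont u)).isClosed
    have hxT : x ∉ T := by
      intro h
      simp only [T, Set.mem_iUnion] at h
      obtain ⟨u, hu, y, hy, hyx⟩ := h
      exact hcon u y hu (by simpa using hy) hyx.symm
    obtain ⟨t, ht, hb⟩ := Metric.isOpen_iff.mp hT.isOpen_compl x hxT
    have hpos := F.real_pos hx ht
    rw [F.self ω _ measurableSet_ball] at hpos
    refine hpos.ne' (Finset.sum_eq_zero ?_)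
    intro v _
    rcases (D.ν_nonneg (F.i ω) v).eq_or_lt with h | h
    · rw [← h, zero_mul]
    · rw [F.null_pre, mul_zero]
      intro y hy hyS
      apply hb hyS
      simp only [T, Set.mem_iUnion]
      exact ⟨v, h, y, by simpa using hy, rfl⟩
  obtain ⟨u, x', hu, hx', rfl⟩ := key
  refine ⟨u, x', hu, hx', rfl, ?_⟩
  intro t ht
  have := F.prob (F.s ω)
  have hr := D.r_pos u
  have hs : 0 < min (D.r u * t) D.δ := lt_min (mul_pos hr ht) D.δ_pos
  have h1 := F.real_pos hx hs
  rw [F.local_eq ω u hu x' hx' _ measurableSet_ball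
    (Metric.ball_subset_ball (min_le_right _ _))] at h1
  have h2 := pos_of_mul_pos_right h1 hu.le
  have h3 : (F.m (F.s ω)).real (D.f u ⁻¹' Metric.ball (D.f u x') (min (D.r u * t) D.δ))
      ≤ (F.m (F.s ω)).real (Metric.ball x' t) := by
    refine measureReal_mono ?_
    intro y hy
    have hy : dist (D.f u y) (D.f u x') < _ := hy
    rw [D.dist_f] at hy
    have := hy.trans_le (min_le_left _ _)
    exact lt_of_mul_lt_mul_left this hr.le
  have h4 := h2.trans_le h3
  exact (ENNReal.toReal_pos_iff.mp h4).1

lemma pre_closedBall (u : U) (x : V) (t : ℝ) :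
    D.f u ⁻¹' Metric.closedBall (D.f u x) t = Metric.closedBall x (t / D.r u) := by
  ext y
  simp only [Set.mem_preimage, Metric.mem_closedBall, D.dist_f]
  rw [le_div_iff₀ (D.r_pos u), mul_comm]

lemma norm_le (ω : Ω) (x : V) (hx : x ∈ msupport (F.m ω)) : ‖x‖ ≤ D.R := by
  obtain ⟨u, x', _, h, rfl, _⟩ := F.descend ω x hx
  exact D.maps u x' h

lemma real_le_one (ω : Ω) (S : Set V) : (F.m ω).real S ≤ 1 := by
  have := F.prob ω
  exact measureReal_le_one

lemma mass_lower (ρ κ : ℝ) (hκ0 : 0 < κ) (hρ : ∀ u, D.r u ≤ ρ)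
    (hκ : ∀ i u, 0 < D.ν i u → κ ≤ D.ν i u) (n : ℕ) :
    ∀ ω, ∀ x ∈ msupport (F.m ω), κ ^ n ≤ (F.m ω).real (Metric.closedBall x (2 * D.R * ρ ^ n)) := by
  induction n with
  | zero =>
    intro ω x hx
    have := F.prob ω
    have hxR := F.norm_le ω x hx
    have h1 : (F.m ω).real (Metric.closedBall x (2 * D.R * ρ ^ 0))ᶜ = 0 := by
      refine le_antisymm ?_ measureReal_nonneg
      rw [← F.hK ω]
      refine measureReal_mono ?_
      intro y hy
      by_contra hc
      apply hy
      have hc : ‖y‖ ≤ D.R := not_lt.mp hc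
      rw [Metric.mem_closedBall, dist_eq_norm, pow_zero, mul_one]
      linarith [norm_sub_le y x]
    rw [probReal_compl_eq_one_sub measurableSet_closedBall] at h1
    rw [pow_zero, pow_zero] at *
    linarith
  | succ n ih =>
    intro ω x hx
    obtain ⟨u, x', hu, hx', rfl, hs⟩ := F.descend ω x hx
    have := F.prob (F.s ω)
    have hr := D.r_pos u
    have hR := D.R_pos
    have hρ0 : 0 < ρ := hr.trans_le (hρ u)
    rw [F.self ω _ measurableSet_closedBall]
    refine le_trans ?_ (Finset.single_le_sum (f := fun v => D.ν (F.i ω) v * (F.m (F.s ω)).real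
      (D.f v ⁻¹' Metric.closedBall (D.f u x') (2 * D.R * ρ ^ (n + 1))))
      (fun v _ => mul_nonneg (D.ν_nonneg _ _) measureReal_nonneg) (Finset.mem_univ u))
    rw [pow_succ, mul_comm]
    refine mul_le_mul (hκ _ _ hu) ?_ (pow_nonneg hκ0.le _) (D.ν_nonneg _ _)
    refine (ih _ x' hs).trans (measureReal_mono ?_)
    rw [pre_closedBall]
    refine Metric.closedBall_subset_closedBall ?_
    rw [le_div_iff₀ hr, pow_succ, ← mul_assoc]
    exact mul_le_mul_of_nonneg_left (hρ u) (by positivity)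

/-- the induction on scales -/
lemma scale_induction (P : Ω → V → ℝ → Prop) (ρ t₀ M rm : ℝ) (hρ0 : 0 < ρ) (hρ1 : ρ < 1) (ht₀ : 0 < t₀)
    (hrm : 0 < rm) (hM : t₀ / rm ≤ M)
    (hρ : ∀ u, D.r u ≤ ρ) (hr : ∀ u, rm ≤ D.r u)
    (base : ∀ ω, ∀ x ∈ msupport (F.m ω), ∀ t, t₀ ≤ t → t ≤ M → P ω x t)
    (step : ∀ ω u x, 0 < D.ν (F.i ω) u → ‖x‖ ≤ D.R → ∀ t, 0 < t → t < t₀ →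
      P (F.s ω) x (t / D.r u) → P ω (D.f u x) t) :
    ∀ ω, ∀ x ∈ msupport (F.m ω), ∀ t, 0 < t → t ≤ M → P ω x t := by
  have main : ∀ n : ℕ, ∀ ω, ∀ x ∈ msupport (F.m ω), ∀ t, t₀ * ρ ^ n ≤ t → t ≤ M → P ω x t := by
    intro n
    induction n with
    | zero => intro ω x hx t ht htM; exact base ω x hx t (by simpa using ht) htM
    | succ n ih =>
      intro ω x hx t ht htM
      rcases le_or_gt t₀ t with h | h
      · exact base ω x hx t h htM
      obtain ⟨u, x', hu, hx', rfl, hs⟩ := F.descend ω x hx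
      have hru := D.r_pos u
      have htpos : 0 < t := lt_of_lt_of_le (by positivity) ht
      refine step ω u x' hu hx' t htpos h (ih _ x' hs _ ?_ ?_)
      · rw [le_div_iff₀ hru]
        refine le_trans ?_ ht
        rw [pow_succ, ← mul_assoc]
        exact mul_le_mul_of_nonneg_left (hρ u) (by positivity)
      · refine le_trans ?_ hM
        exact div_le_div₀ ht₀.le h.le hrm (hr u)
  intro ω x hx t ht htM
  obtain ⟨n, hn⟩ := exists_pow_lt_of_lt_one (div_pos ht ht₀) hρ1
  refine main n ω x hx t ?_ htM
  rw [lt_div_iff₀ ht₀] at hn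
  linarith

lemma global_nc (rm κ : ℝ) (hrm0 : 0 < rm) (hκ1 : κ < 1) (hr : ∀ u, rm ≤ D.r u) (hrm1 : rm < 1)
    (hκ : ∀ i u, 0 < D.ν i u → κ ≤ D.ν i u) (n : ℕ) :
    ∀ ω (W : AffineSubspace ℝ V), (W : Set V).Nonempty → W ≠ ⊤ →
      (F.m ω).real (affNbhd W (D.e * rm ^ n)) ≤ (1 - κ) ^ n := by
  induction n with
  | zero => intro ω W _ _; simpa using F.real_le_one ω _
  | succ n ih =>
    intro ω W hW hW1
    have hpr := F.prob (F.s ω)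
    have he := D.e_pos
    obtain ⟨u, hu, hnc⟩ := D.nc (F.i ω) W hW hW1
    rw [F.self ω _ (measurableSet_affNbhd _ _)]
    have hz : (F.m (F.s ω)).real (D.f u ⁻¹' affNbhd W (D.e * rm ^ (n + 1))) = 0 := by
      refine F.null_pre _ _ _ ?_
      intro x hx hc
      have h1 := hnc x hx
      have h2 : Metric.infDist (D.f u x) (W : Set V) ≤ D.e * rm ^ (n + 1) := hc
      have h3 : rm ^ (n + 1) ≤ 1 := pow_le_one₀ hrm0.le hrm1.le
      nlinarith
    have hb : ∀ v, (F.m (F.s ω)).real (D.f v ⁻¹' affNbhd W (D.e * rm ^ (n + 1))) ≤ (1 - κ) ^ n := by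
      intro v
      refine le_trans (measureReal_mono ?_) (ih (F.s ω) (W.comap (D.f v)) (D.comap_nonempty v W hW)
        (D.comap_ne_top v W hW1))
      intro y hy
      have h1 : Metric.infDist (D.f v y) (W : Set V) ≤ D.e * rm ^ (n + 1) := hy
      have h2 := D.infDist_f v W hW y
      have h3 : Metric.infDist y ((W.comap (D.f v) : AffineSubspace ℝ V) : Set V)
        ≤ D.e * rm ^ n := by
        refine le_of_mul_le_mul_left ?_ (D.r_pos v)
        refine (h2.trans h1).trans ?_
        rw [pow_succ, ← mul_assoc, mul_comm (D.r v)]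
        exact mul_le_mul_of_nonneg_left (hr v) (by positivity)
      exact h3
    classical
    rw [← Finset.add_sum_erase _ _ (Finset.mem_univ u), hz, mul_zero, zero_add]
    calc _ ≤ ∑ v ∈ Finset.univ.erase u, D.ν (F.i ω) v * (1 - κ) ^ n :=
          Finset.sum_le_sum fun v _ => mul_le_mul_of_nonneg_left (hb v) (D.ν_nonneg _ _)
      _ = (1 - D.ν (F.i ω) u) * (1 - κ) ^ n := by
          rw [← Finset.sum_mul, ← D.ν_sum (F.i ω), ← Finset.add_sum_erase _ _ (Finset.mem_univ u)]
          ring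
      _ ≤ (1 - κ) ^ (n + 1) := by
          rw [pow_succ, mul_comm]
          refine mul_le_mul_of_nonneg_left ?_ (pow_nonneg (by linarith) _)
          linarith [hκ _ _ hu]

lemma global_nc' [Nonempty U] : ∃ C α : ℝ, 0 < C ∧ 0 < α ∧
    ∀ ω (W : AffineSubspace ℝ V), (W : Set V).Nonempty → W ≠ ⊤ → ∀ t, 0 < t →
      (F.m ω).real (affNbhd W t) ≤ C * t ^ α := by
  obtain ⟨ρ, rm, κ, hrm0, hrm1, hρ0, hρ1, hκ0, hκ1, hr, hρ, hκ⟩ := D.exists_consts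
  have he := D.e_pos
  have hk : 0 < 1 - κ := by linarith
  set α := Real.log (1 - κ) / Real.log rm with hα
  have hl1 : Real.log rm < 0 := Real.log_neg hrm0 hrm1
  have hl2 : Real.log (1 - κ) < 0 := Real.log_neg hk (by linarith)
  have hα0 : 0 < α := div_pos_of_neg_of_neg hl2 hl1
  have hpow : rm ^ α = 1 - κ := by
    rw [Real.rpow_def_of_pos hrm0, hα, mul_div_cancel₀ _ hl1.ne, Real.exp_log hk]
  refine ⟨(1 - κ)⁻¹ * D.e⁻¹ ^ α, α, by positivity, hα0, ?_⟩
  intro ω W hW hW1 t ht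
  have hpr := F.prob ω
  have hrw : (1 - κ)⁻¹ * D.e⁻¹ ^ α * t ^ α = (1 - κ)⁻¹ * (t / D.e) ^ α := by
    rw [mul_assoc, ← Real.mul_rpow (by positivity) ht.le, div_eq_inv_mul]
  rw [hrw]
  rcases le_or_gt t D.e with h | h
  · obtain ⟨n, hn1, hn2⟩ := exists_nat_pow_near_of_lt_one (div_pos ht he)
      ((div_le_one he).mpr h) hrm0 hrm1
    have h1 := F.global_nc rm κ hrm0 hκ1 hr hrm1 hκ n ω W hW hW1
    have h2 : (F.m ω).real (affNbhd W t) ≤ (1 - κ) ^ n := by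
      refine le_trans (measureReal_mono ?_) h1
      intro y hy
      refine le_trans (show Metric.infDist y (W : Set V) ≤ t from hy) ?_
      rw [div_le_iff₀ he] at hn2
      linarith
    refine h2.trans ?_
    have h3 : (rm ^ (n + 1)) ^ α ≤ (t / D.e) ^ α :=
      Real.rpow_le_rpow (by positivity) hn1.le hα0.le
    have h4 : (rm ^ (n + 1)) ^ α = (1 - κ) ^ (n + 1) := by
      rw [← hpow, ← Real.rpow_natCast, ← Real.rpow_natCast, ← Real.rpow_mul hrm0.le,
        ← Real.rpow_mul hrm0.le, mul_comm]
    rw [h4] at h3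
    calc (1 - κ) ^ n = (1 - κ)⁻¹ * (1 - κ) ^ (n + 1) := by field_simp; ring
      _ ≤ _ := mul_le_mul_of_nonneg_left h3 (by positivity)
  · refine (F.real_le_one ω _).trans ?_
    have h1 : 1 ≤ (1 - κ)⁻¹ := (one_le_inv₀ hk).mpr (by linarith)
    have h2 : 1 ≤ (t / D.e) ^ α :=
      Real.one_le_rpow ((one_le_div he).mpr h.le) hα0.le
    nlinarith

theorem main [Nonempty U] : ∃ C₁ C₂ α : ℝ, 0 < C₁ ∧ 0 < C₂ ∧ 0 < α ∧
    (∀ ω, ∀ x ∈ msupport (F.m ω), ∀ r : ℝ, 0 < r →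
      (F.m ω).real (Metric.closedBall x (2 * r)) ≤ C₁ * (F.m ω).real (Metric.closedBall x r)) ∧
    (∀ ω, ∀ x ∈ msupport (F.m ω), ∀ W : AffineSubspace ℝ V, (W : Set V).Nonempty → W ≠ ⊤ →
      ∀ r t : ℝ, 0 < r → r ≤ 1 → 0 < t →
      (F.m ω).real (affNbhd W (t * r) ∩ Metric.closedBall x r) ≤
        C₂ * t ^ α * (F.m ω).real (Metric.closedBall x r)) := by
  obtain ⟨ρ, rm, κ, hrm0, hrm1, hρ0, hρ1, hκ0, hκ1, hr, hρ, hκ⟩ := D.exists_consts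
  obtain ⟨C, α, hC, hα, hnc⟩ := F.global_nc'
  have hδ := D.δ_pos
  have hR := D.R_pos
  obtain ⟨N, hN⟩ := exists_pow_lt_of_lt_one
    (show 0 < D.δ / 4 / (2 * D.R) by positivity) hρ1
  rw [lt_div_iff₀ (by positivity)] at hN
  have hlow : ∀ ω, ∀ x ∈ msupport (F.m ω), ∀ t, D.δ / 4 ≤ t →
      κ ^ N ≤ (F.m ω).real (Metric.closedBall x t) := by
    intro ω x hx t ht
    have := F.prob ω
    refine (F.mass_lower ρ κ hκ0 hρ hκ N ω x hx).trans (measureReal_mono ?_)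
    exact Metric.closedBall_subset_closedBall (by linarith)
  have hκN : 0 < κ ^ N := pow_pos hκ0 N
  set M := max 1 (D.δ / 4 / rm) with hM
  have hM1 : 1 ≤ M := le_max_left _ _
  refine ⟨(κ ^ N)⁻¹, C * M ^ α * (κ ^ N)⁻¹, α, by positivity, by positivity, hα, ?_, ?_⟩
  · intro ω x hx r hr0
    refine F.scale_induction (fun ω x t => (F.m ω).real (Metric.closedBall x (2 * t)) ≤
      (κ ^ N)⁻¹ * (F.m ω).real (Metric.closedBall x t)) ρ (D.δ / 4) (max r (D.δ / 4 / rm)) rm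
      hρ0 hρ1 (by positivity) hrm0 (le_max_right _ _) hρ hr ?_ ?_ ω x hx r hr0 (le_max_left _ _)
    · intro ω x hx t ht _
      rw [← div_eq_inv_mul, le_div_iff₀ hκN]
      have h1 := hlow ω x hx t ht
      have h2 := F.real_le_one ω (Metric.closedBall x (2 * t))
      nlinarith [measureReal_nonneg (μ := F.m ω) (s := Metric.closedBall x (2 * t))]
    · intro ω u x hu hx t ht ht2 ih
      rw [F.local_eq ω u hu x hx _ measurableSet_closedBall
          (Metric.closedBall_subset_ball (by linarith)),
        F.local_eq ω u hu x hx _ measurableSet_closedBall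
          (Metric.closedBall_subset_ball (by linarith)), pre_closedBall, pre_closedBall, mul_div_assoc]
      rw [mul_left_comm]
      exact mul_le_mul_of_nonneg_left ih hu.le
  · intro ω x hx W hW hW1 r t hr0 hr1 ht
    refine F.scale_induction (fun ω x r => ∀ W : AffineSubspace ℝ V, (W : Set V).Nonempty → W ≠ ⊤ →
      (F.m ω).real (affNbhd W (t * r) ∩ Metric.closedBall x r) ≤
        C * M ^ α * (κ ^ N)⁻¹ * t ^ α * (F.m ω).real (Metric.closedBall x r)) ρ (D.δ / 4) M rm
      hρ0 hρ1 (by positivity) hrm0 (le_max_right _ _) hρ hr ?_ ?_ ω x hx r hr0 (hr1.trans hM1) W hW hW1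
    · intro ω x hx r hr0 hrM W hW hW1
      have := F.prob ω
      have hr0' : 0 < r := by linarith
      have h1 : (F.m ω).real (affNbhd W (t * r) ∩ Metric.closedBall x r) ≤ C * (t * r) ^ α :=
        (measureReal_mono Set.inter_subset_left).trans (hnc ω W hW hW1 _ (by positivity))
      have h2 : (t * r) ^ α ≤ t ^ α * M ^ α := by
        rw [Real.mul_rpow ht.le hr0'.le]
        exact mul_le_mul_of_nonneg_left (Real.rpow_le_rpow hr0'.le hrM hα.le) (by positivity)
      calc _ ≤ C * (t ^ α * M ^ α) := h1.trans (mul_le_mul_of_nonneg_left h2 hC.le)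
        _ = C * M ^ α * (κ ^ N)⁻¹ * t ^ α * κ ^ N := by field_simp
        _ ≤ _ := mul_le_mul_of_nonneg_left (hlow ω x hx r hr0) (by positivity)
    · intro ω u x hu hx r hr0 hr2 ih W hW hW1
      have hb : Metric.closedBall (D.f u x) r ⊆ Metric.ball (D.f u x) D.δ :=
        Metric.closedBall_subset_ball (by linarith)
      have hpr := F.prob (F.s ω)
      rw [F.local_eq ω u hu x hx _ ((measurableSet_affNbhd _ _).inter measurableSet_closedBall)
          (Set.inter_subset_right.trans hb),
        F.local_eq ω u hu x hx _ measurableSet_closedBall hb, pre_closedBall, mul_left_comm]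
      refine mul_le_mul_of_nonneg_left (le_trans (measureReal_mono ?_)
        (ih (W.comap (D.f u)) (D.comap_nonempty u W hW) (D.comap_ne_top u W hW1))) hu.le
      rw [Set.preimage_inter, pre_closedBall]
      refine Set.inter_subset_inter_left _ ?_
      intro y hy
      have h1 : Metric.infDist (D.f u y) (W : Set V) ≤ t * r := hy
      have h2 := D.infDist_f u W hW y
      show Metric.infDist y _ ≤ t * (r / D.r u)
      rw [← mul_div_assoc, le_div_iff₀ (D.r_pos u)]
      linarith

end MoranFam

/-! ### Part 2: infinite products and the random measures -/

/-- prepend a letter to a sequence -/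
def consSeq {X : Type*} (q : X × (ℕ → X)) : ℕ → X := fun n => Nat.casesOn n q.1 q.2

lemma measurable_consSeq {X : Type*} [MeasurableSpace X] :
    Measurable (consSeq : X × (ℕ → X) → (ℕ → X)) := by
  rw [measurable_pi_iff]
  intro n
  cases n with
  | zero => exact measurable_fst
  | succ n => exact (measurable_pi_apply n).comp measurable_snd

lemma infinitePi_cons {X : Type*} [MeasurableSpace X] (P : Measure X) [IsProbabilityMeasure P] :
    Measure.map consSeq (P.prod (Measure.infinitePi (fun _ : ℕ => P))) =
      Measure.infinitePi (fun _ : ℕ => P) := by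
  classical
  refine Measure.eq_infinitePi _ ?_
  intro s t ht
  let t' : ℕ → Set X := fun i => if i ∈ s then t i else Set.univ
  have ht' : ∀ i, MeasurableSet (t' i) := by
    intro i
    by_cases h : i ∈ s
    · simpa [t', h] using ht i
    · simp [t', h]
  obtain ⟨N, hN⟩ : ∃ N, ∀ i ∈ s, i < N + 1 :=
    ⟨s.sup id, fun i hi => Nat.lt_succ_of_le (Finset.le_sup (f := id) hi)⟩
  have hsub : s ⊆ Finset.range (N + 1) := fun i hi => Finset.mem_range.mpr (hN i hi)
  have h1 : ∏ i ∈ s, P (t i) = ∏ i ∈ Finset.range (N + 1), P (t' i) := by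
    rw [← Finset.prod_subset hsub (f := fun i => P (t' i))]
    · exact Finset.prod_congr rfl fun i hi => by simp [t', hi]
    · intro i _ hi
      simp [t', hi]
  have h2 : (s : Set ℕ).pi t = {x | x 0 ∈ t' 0 ∧ ∀ i ∈ Finset.range N, x (i + 1) ∈ t' (i + 1)} := by
    ext x
    simp only [Set.mem_pi, Set.mem_ofPred_eq, SetLike.mem_coe]
    constructor
    · intro h
      have : ∀ i, x i ∈ t' i := by
        intro i
        by_cases hi : i ∈ s
        · simpa [t', hi] using h i hi
        · simp [t', hi]
      exact ⟨this 0, fun i _ => this (i + 1)⟩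
    · rintro ⟨h0, h1⟩ i hi
      cases i with
      | zero => simpa [t', hi] using h0
      | succ i =>
        have := h1 i (Finset.mem_range.mpr (by have := hN _ hi; omega))
        simpa [t', hi] using this
  have hm : MeasurableSet ((s : Set ℕ).pi t) :=
    MeasurableSet.pi s.countable_toSet (fun i _ => ht i)
  rw [Measure.map_apply measurable_consSeq hm, h1, Finset.prod_range_succ', h2]
  have h3 : consSeq ⁻¹' {x : ℕ → X | x 0 ∈ t' 0 ∧ ∀ i ∈ Finset.range N, x (i + 1) ∈ t' (i + 1)} =
      (t' 0) ×ˢ ((Finset.range N : Set ℕ).pi (fun i => t' (i + 1))) := by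
    ext ⟨a, x⟩
    simp [consSeq, Set.mem_pi]
  rw [h3, Measure.prod_prod, Measure.infinitePi_pi _ (fun i _ => ht' (i + 1)), mul_comm]

lemma lintegral_infinitePi_cons {X : Type*} [MeasurableSpace X] (P : Measure X)
    [IsProbabilityMeasure P] (g : (ℕ → X) → ENNReal) (hg : Measurable g) :
    ∫⁻ x, g x ∂(Measure.infinitePi (fun _ : ℕ => P)) =
      ∫⁻ a, ∫⁻ x, g (consSeq (a, x)) ∂(Measure.infinitePi (fun _ : ℕ => P)) ∂P := by
  conv_lhs => rw [← infinitePi_cons P]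
  rw [lintegral_map hg measurable_consSeq]
  exact lintegral_prod _ (hg.comp measurable_consSeq).aemeasurable

/-- finitely supported measure with given weights -/
def wm {U : Type*} [Fintype U] [MeasurableSpace U] (w : U → ℝ) : Measure U :=
  ∑ u, ENNReal.ofReal (w u) • Measure.dirac u

lemma wm_prob {U : Type*} [Fintype U] [MeasurableSpace U] (w : U → ℝ) (h0 : ∀ u, 0 ≤ w u)
    (h1 : ∑ u, w u = 1) : IsProbabilityMeasure (wm w) := by
  constructor
  simp only [wm, Measure.finsetSum_apply, Measure.smul_apply, measure_univ, smul_eq_mul, mul_one]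
  rw [← ENNReal.ofReal_sum_of_nonneg (fun u _ => h0 u), h1, ENNReal.ofReal_one]

lemma lintegral_wm {U : Type*} [Fintype U] [MeasurableSpace U] [DiscreteMeasurableSpace U]
    (w : U → ℝ) (g : U → ENNReal) : ∫⁻ u, g u ∂(wm w) = ∑ u, ENNReal.ofReal (w u) * g u := by
  simp [wm, lintegral_finsetSum_measure, lintegral_smul_measure]

section construct

variable {U : Type*} [Fintype U] (D : Moran V U)

/-- approximations of the coding map -/
def codeApprox (n : ℕ) (u : ℕ → U) : V := wordMap (fun a => (D.f a : V → V)) n u 0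

lemma codeApprox_succ (n : ℕ) (u : ℕ → U) :
    codeApprox D (n + 1) u = D.f (u 0) (codeApprox D n (fun k => u (k + 1))) := rfl

lemma codeApprox_norm (n : ℕ) : ∀ u, ‖codeApprox D n u‖ ≤ D.R := by
  induction n with
  | zero => intro u; simpa [codeApprox, wordMap] using D.R_pos.le
  | succ n ih => intro u; rw [codeApprox_succ]; exact D.maps _ _ (ih _)

lemma codeApprox_dist (ρ : ℝ) (hρ0 : 0 < ρ) (hρ : ∀ u, D.r u ≤ ρ) (n : ℕ) :
    ∀ u, dist (codeApprox D n u) (codeApprox D (n + 1) u) ≤ D.R * ρ ^ n := by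
  induction n with
  | zero =>
    intro u
    have := codeApprox_norm D 1 u
    simpa [codeApprox, wordMap] using this
  | succ n ih =>
    intro u
    have hR := D.R_pos
    rw [codeApprox_succ, codeApprox_succ D (n + 1), D.dist_f, pow_succ, ← mul_assoc, mul_comm]
    exact mul_le_mul (ih _) (hρ _) (D.r_pos _).le (by positivity)

lemma codeApprox_tendsto [Nonempty U] (u : ℕ → U) :
    ∃ x, Tendsto (fun n => codeApprox D n u) atTop (𝓝 x) := by
  obtain ⟨ρ, rm, κ, hrm0, hrm1, hρ0, hρ1, hκ0, hκ1, hr, hρ, hκ⟩ := D.exists_consts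
  exact cauchySeq_tendsto_of_complete
    (cauchySeq_of_le_geometric ρ D.R hρ1 (fun n => codeApprox_dist D ρ hρ0 hρ n u))

/-- the coding map -/
def code [Nonempty U] (u : ℕ → U) : V := (codeApprox_tendsto D u).choose

lemma code_spec [Nonempty U] (u : ℕ → U) :
    Tendsto (fun n => codeApprox D n u) atTop (𝓝 (code D u)) := (codeApprox_tendsto D u).choose_spec

lemma code_norm [Nonempty U] (u : ℕ → U) : ‖code D u‖ ≤ D.R :=
  le_of_tendsto (code_spec D u).norm (Eventually.of_forall fun n => codeApprox_norm D n u)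

lemma code_cons [Nonempty U] (u : ℕ → U) : code D u = D.f (u 0) (code D (fun k => u (k + 1))) := by
  have h1 := (tendsto_add_atTop_iff_nat 1).mpr (code_spec D u)
  have h2 := ((D.cont (u 0)).tendsto _).comp (code_spec D (fun k => u (k + 1)))
  exact tendsto_nhds_unique h1 h2

variable [MeasurableSpace U] [DiscreteMeasurableSpace U]

lemma measurable_codeApprox (n : ℕ) : Measurable (codeApprox D n : (ℕ → U) → V) := by
  induction n with
  | zero => exact measurable_const
  | succ n ih =>
    have h1 : Measurable (fun q : U × V => D.f q.1 q.2) :=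
      measurable_from_prod_countable_right (fun u => (D.cont u).measurable)
    have h2 : Measurable (fun u : ℕ → U => (u 0, codeApprox D n (fun k => u (k + 1)))) := by
      refine (measurable_pi_apply 0).prodMk (ih.comp ?_)
      exact measurable_pi_iff.mpr fun k => measurable_pi_apply (k + 1)
    exact h1.comp h2

lemma measurable_code [Nonempty U] : Measurable (code D : (ℕ → U) → V) :=
  measurable_of_tendsto_metrizable (measurable_codeApprox D)
    (tendsto_pi_nhds.mpr fun u => code_spec D u)

/-- choice of letters -/
def sel (q : (ℕ → U) × (ℕ → (U → U))) : ℕ → U := fun n => q.2 n (q.1 n)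

lemma measurable_sel : Measurable (sel : (ℕ → U) × (ℕ → (U → U)) → (ℕ → U)) := by
  refine measurable_pi_iff.mpr fun n => ?_
  have h1 : Measurable (fun q : U × (U → U) => q.2 q.1) :=
    measurable_from_prod_countable_right (fun u => measurable_pi_apply u)
  have h2 : Measurable (fun q : (ℕ → U) × (ℕ → (U → U)) => (q.1 n, q.2 n)) := by fun_prop
  exact h1.comp h2

/-- one-step randomness -/
def stepLaw : Measure (U → U) := Measure.pi (fun i => wm (D.ν i))

lemma wm_prob' (i : U) : IsProbabilityMeasure (wm (D.ν i)) := wm_prob _ (D.ν_nonneg i) (D.ν_sum i)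

instance stepLaw_prob : IsProbabilityMeasure (stepLaw D) := by
  have := wm_prob' D
  unfold stepLaw
  infer_instance

/-- the full randomness -/
def fullLaw : Measure (ℕ → (U → U)) := Measure.infinitePi (fun _ => stepLaw D)

instance fullLaw_prob : IsProbabilityMeasure (fullLaw D) := by
  unfold fullLaw
  infer_instance

lemma lintegral_stepLaw (i : U) (g : U → ENNReal) :
    ∫⁻ t, g (t i) ∂(stepLaw D) = ∑ u, ENNReal.ofReal (D.ν i u) * g u := by
  have := wm_prob' D
  rw [← lintegral_wm]
  have h := measurePreserving_eval (fun i => wm (D.ν i)) i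
  exact h.lintegral_comp (measurable_of_countable g)

/-- the random measures -/
def rmeas [Nonempty U] (ω : ℕ → U) : Measure V :=
  Measure.map (fun θ => code D (sel (ω, θ))) (fullLaw D)

lemma measurable_code_sel [Nonempty U] :
    Measurable (fun q : (ℕ → U) × (ℕ → (U → U)) => code D (sel q)) :=
  (measurable_code D).comp measurable_sel

lemma rmeas_apply [Nonempty U] (ω : ℕ → U) (S : Set V) (hS : MeasurableSet S) :
    rmeas D ω S = fullLaw D ((fun θ => code D (sel (ω, θ))) ⁻¹' S) :=
  Measure.map_apply ((measurable_code_sel D).comp measurable_prodMk_left) hS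

lemma rmeas_prob [Nonempty U] (ω : ℕ → U) : IsProbabilityMeasure (rmeas D ω) :=
  Measure.isProbabilityMeasure_map
    ((measurable_code_sel D).comp measurable_prodMk_left).aemeasurable

lemma rmeas_measurable [Nonempty U] (S : Set V) (hS : MeasurableSet S) :
    Measurable (fun ω => rmeas D ω S) := by
  simp_rw [rmeas_apply D _ S hS]
  exact measurable_measure_prodMk_left (measurable_code_sel D hS)

lemma rmeas_self [Nonempty U] (ω : ℕ → U) (S : Set V) (hS : MeasurableSet S) :
    rmeas D ω S = ∑ u, ENNReal.ofReal (D.ν (ω 0) u) *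
      rmeas D (fun k => ω (k + 1)) (D.f u ⁻¹' S) := by
  have hm : Measurable (fun θ => code D (sel (ω, θ))) :=
    (measurable_code_sel D).comp measurable_prodMk_left
  have h1 : rmeas D ω S =
      ∫⁻ θ, Set.indicator S (fun _ => 1) (code D (sel (ω, θ))) ∂(fullLaw D) := by
    rw [rmeas_apply D ω S hS, ← lintegral_indicator_one (hm hS)]
    rfl
  have hg : Measurable (fun θ => Set.indicator S (fun _ => (1 : ENNReal)) (code D (sel (ω, θ)))) :=
    (measurable_const.indicator hS).comp hm
  rw [h1, fullLaw, lintegral_infinitePi_cons _ _ hg, ← lintegral_stepLaw D (ω 0)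
    (fun u => rmeas D (fun k => ω (k + 1)) (D.f u ⁻¹' S))]
  refine lintegral_congr fun t => ?_
  have hS' : MeasurableSet (D.f (t (ω 0)) ⁻¹' S) := (D.cont _).measurable hS
  have hm' : Measurable (fun θ => code D (sel ((fun k => ω (k + 1)), θ))) :=
    (measurable_code_sel D).comp measurable_prodMk_left
  rw [rmeas_apply D _ _ hS', ← lintegral_indicator_one (hm' hS')]
  refine lintegral_congr fun θ => ?_
  rw [code_cons]
  rfl

/-- the random family as a `MoranFam` -/
def rfam [Nonempty U] : MoranFam D (ℕ → U) where
  s := fun ω k => ω (k + 1)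
  i := fun ω => ω 0
  m := rmeas D
  prob := rmeas_prob D
  hK := by
    intro ω
    have hS : MeasurableSet {x : V | D.R < ‖x‖} :=
      (isOpen_lt continuous_const continuous_norm).measurableSet
    have : (fun θ => code D (sel (ω, θ))) ⁻¹' {x : V | D.R < ‖x‖} = ∅ := by
      ext θ
      simpa using code_norm D _
    rw [measureReal_def, rmeas_apply D ω _ hS, this]
    simp
  self := by
    intro ω S hS
    have := rmeas_prob D
    rw [measureReal_def, rmeas_self D ω S hS, ENNReal.toReal_sum]
    · refine Finset.sum_congr rfl fun u _ => ?_
      rw [ENNReal.toReal_mul, ENNReal.toReal_ofReal (D.ν_nonneg _ _)]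
      rfl
    · intro u _
      exact ENNReal.mul_ne_top ENNReal.ofReal_ne_top (measure_ne_top _ _)

/-- the averaged measure -/
def avg [Nonempty U] (q : U → ℝ) : Measure V :=
  Measure.map (fun x => code D (sel x)) ((Measure.infinitePi (fun _ : ℕ => wm q)).prod (fullLaw D))

lemma avg_apply [Nonempty U] (q : U → ℝ) (S : Set V) (hS : MeasurableSet S) :
    avg D q S = ∫⁻ ω, rmeas D ω S ∂(Measure.infinitePi (fun _ : ℕ => wm q)) := by
  rw [avg, Measure.map_apply (measurable_code_sel D) hS,
    Measure.prod_apply (measurable_code_sel D hS)]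
  refine lintegral_congr fun ω => ?_
  rw [rmeas_apply D ω S hS]
  rfl

lemma avg_stat [Nonempty U] (q : U → ℝ) (hq : ∀ u, 0 ≤ q u) (hq1 : ∑ u, q u = 1)
    (p : U → ℝ) (hp : ∀ u, ∑ i, q i * D.ν i u = p u) :
    avg D q = ∑ u, ENNReal.ofReal (p u) • Measure.map (D.f u) (avg D q) := by
  have := wm_prob q hq hq1
  ext S hS
  rw [avg_apply D q S hS, lintegral_infinitePi_cons _ _ (rmeas_measurable D S hS), lintegral_wm]
  have h1 : ∀ i : U, ∫⁻ x, rmeas D (consSeq (i, x)) S ∂(Measure.infinitePi (fun _ : ℕ => wm q)) =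
      ∑ u, ENNReal.ofReal (D.ν i u) * avg D q (D.f u ⁻¹' S) := by
    intro i
    have h2 : ∀ x : ℕ → U, rmeas D (consSeq (i, x)) S =
        ∑ u, ENNReal.ofReal (D.ν i u) * rmeas D x (D.f u ⁻¹' S) := by
      intro x
      rw [rmeas_self D _ S hS]
      rfl
    simp_rw [h2]
    rw [lintegral_finsetSum]
    · refine Finset.sum_congr rfl fun u _ => ?_
      have hS' : MeasurableSet (D.f u ⁻¹' S) := (D.cont _).measurable hS
      rw [lintegral_const_mul _ (rmeas_measurable D _ hS'), avg_apply D q _ hS']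
    · intro u _
      exact (rmeas_measurable D _ ((D.cont _).measurable hS)).const_mul _
  simp_rw [h1, Finset.mul_sum]
  rw [Finset.sum_comm]
  simp only [Measure.finsetSum_apply, Measure.smul_apply, smul_eq_mul]
  refine Finset.sum_congr rfl fun u _ => ?_
  rw [Measure.map_apply (D.cont u).measurable hS, ← hp u,
    ENNReal.ofReal_sum_of_nonneg (fun i _ => mul_nonneg (hq i) (D.ν_nonneg _ _)), Finset.sum_mul]
  refine Finset.sum_congr rfl fun i _ => ?_
  rw [ENNReal.ofReal_mul (hq i), mul_assoc]

end construct

/-! ### Part 3: uniqueness of stationary measures -/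

lemma adjoint_norm_le (L : V →ₗ[ℝ] V) (ρ : ℝ) (hL : ∀ x, ‖L x‖ ≤ ρ * ‖x‖) (t : V) :
    ‖LinearMap.adjoint L t‖ ≤ ρ * ‖t‖ := by
  set y := LinearMap.adjoint L t with hy
  have h1 : ‖y‖ ^ 2 ≤ ρ * ‖y‖ * ‖t‖ := by
    rw [← real_inner_self_eq_norm_sq]
    nth_rewrite 2 [hy]
    rw [LinearMap.adjoint_inner_right]
    exact (real_inner_le_norm _ _).trans (mul_le_mul_of_nonneg_right (hL y) (norm_nonneg _))
  rcases (norm_nonneg y).eq_or_lt with h | h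
  · rw [← h]
    rcases (norm_nonneg t).eq_or_lt with h' | h'
    · rw [← h', mul_zero]
    · have := (norm_nonneg _).trans (hL t)
      exact this
  · have : ‖y‖ * ‖y‖ ≤ ‖y‖ * (ρ * ‖t‖) := by nlinarith
    exact le_of_mul_le_mul_left this h

lemma charFun_stat {U : Type*} [Fintype U] (f : U → V →ᵃ[ℝ] V) (p : U → ℝ) (hp : ∀ u, 0 ≤ p u)
    (μ : Measure V) [IsProbabilityMeasure μ]
    (h : μ = ∑ u, ENNReal.ofReal (p u) • Measure.map (f u) μ) (t : V) :
    charFun μ t = ∑ u, (p u : ℂ) * (Complex.exp ((inner ℝ (f u 0) t : ℝ) * Complex.I) *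
      charFun μ (LinearMap.adjoint (f u).linear t)) := by
  have hm : ∀ u, Measurable (f u) := fun u => (f u).continuous_of_finiteDimensional.measurable
  have hprob : ∀ u, IsProbabilityMeasure (Measure.map (f u) μ) :=
    fun u => Measure.isProbabilityMeasure_map (hm u).aemeasurable
  have hcont : Continuous (fun x : V => Complex.exp ((inner ℝ x t : ℝ) * Complex.I)) := by fun_prop
  have hintegr : ∀ (η : Measure V) [IsFiniteMeasure η],
      Integrable (fun x : V => Complex.exp ((inner ℝ x t : ℝ) * Complex.I)) η := by
    intro η _
    refine Integrable.of_bound hcont.aestronglyMeasurable 1 (ae_of_all _ fun x => ?_)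
    rw [Complex.norm_exp_ofReal_mul_I]
  conv_lhs => rw [charFun_apply, h]
  rw [integral_finsetSum_measure]
  · refine Finset.sum_congr rfl fun u _ => ?_
    rw [integral_smul_measure, ENNReal.toReal_ofReal (hp u), Complex.real_smul,
      integral_map (hm u).aemeasurable hcont.aestronglyMeasurable, charFun_apply,
      ← integral_const_mul (Complex.exp ((inner ℝ (f u 0) t : ℝ) * Complex.I))]
    refine congrArg (fun z : ℂ => (p u : ℂ) * z)
      (integral_congr_ae (μ := μ) (ae_of_all _ fun x => ?_))
    simp only
    rw [← Complex.exp_add]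
    congr 1
    rw [LinearMap.adjoint_inner_right, ← add_mul]
    congr 1
    have : f u x = (f u).linear x + f u 0 := by
      have := (f u).map_vadd 0 x
      simpa using this
    rw [this, inner_add_left]
    push_cast
    ring
  · intro u _
    exact (hintegr _).smul_measure ENNReal.ofReal_ne_top

lemma stat_unique {U : Type*} [Fintype U] (f : U → V →ᵃ[ℝ] V) (p : U → ℝ) (hp : ∀ u, 0 ≤ p u)
    (hp1 : ∑ u, p u = 1) (ρ : ℝ) (hρ0 : 0 < ρ) (hρ1 : ρ < 1)
    (hf : ∀ u x y, dist (f u x) (f u y) ≤ ρ * dist x y)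
    (μ₁ μ₂ : Measure V) [IsProbabilityMeasure μ₁] [IsProbabilityMeasure μ₂]
    (h₁ : μ₁ = ∑ u, ENNReal.ofReal (p u) • Measure.map (f u) μ₁)
    (h₂ : μ₂ = ∑ u, ENNReal.ofReal (p u) • Measure.map (f u) μ₂) : μ₁ = μ₂ := by
  have hL : ∀ u x, ‖(f u).linear x‖ ≤ ρ * ‖x‖ := by
    intro u x
    have h := hf u x 0
    rw [dist_eq_norm, dist_zero_right] at h
    have : f u x - f u 0 = (f u).linear x := by
      have := (f u).linearMap_vsub x 0
      simpa using this.symm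
    rwa [this] at h
  have hcont : ∀ (η : Measure V) [IsFiniteMeasure η], Continuous (charFun η) := by
    intro η _
    exact continuous_charFun
  set Δ : V → ℂ := fun t => charFun μ₁ t - charFun μ₂ t with hΔ
  have hΔc : Continuous Δ := (hcont μ₁).sub (hcont μ₂)
  have hΔ0 : Δ 0 = 0 := by simp [hΔ, charFun_zero]
  have hstep : ∀ (c : ℝ) t, (∀ u, ‖Δ (LinearMap.adjoint (f u).linear t)‖ ≤ c) → ‖Δ t‖ ≤ c := by
    intro c t hc
    have : Δ t = ∑ u, (p u : ℂ) * (Complex.exp ((inner ℝ (f u 0) t : ℝ) * Complex.I) *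
      Δ (LinearMap.adjoint (f u).linear t)) := by
      simp only [hΔ]
      rw [charFun_stat f p hp μ₁ h₁ t, charFun_stat f p hp μ₂ h₂ t, ← Finset.sum_sub_distrib]
      exact Finset.sum_congr rfl fun u _ => by ring
    rw [this]
    refine (norm_sum_le _ _).trans ?_
    calc _ ≤ ∑ u, p u * c := by
          refine Finset.sum_le_sum fun u _ => ?_
          rw [norm_mul, norm_mul, Complex.norm_exp_ofReal_mul_I, one_mul, Complex.norm_real,
            Real.norm_of_nonneg (hp u)]
          exact mul_le_mul_of_nonneg_left (hc u) (hp u)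
      _ = c := by rw [← Finset.sum_mul, hp1, one_mul]
  refine Measure.ext_of_charFun ?_
  funext t
  rw [← sub_eq_zero]
  change Δ t = 0
  rw [← norm_le_zero_iff]
  refine le_of_forall_pos_le_add fun c hc => ?_
  rw [zero_add]
  obtain ⟨η, hη, hb⟩ := Metric.continuousAt_iff.mp (hΔc.continuousAt (x := 0)) c hc
  have main : ∀ n : ℕ, ∀ t, ρ ^ n * ‖t‖ < η → ‖Δ t‖ ≤ c := by
    intro n
    induction n with
    | zero =>
      intro t ht
      have := hb (x := t) (by simpa using ht)
      rw [hΔ0, dist_zero_right] at this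
      exact this.le
    | succ n ih =>
      intro t ht
      refine hstep c t fun u => ih _ ?_
      refine lt_of_le_of_lt ?_ ht
      rw [pow_succ, mul_assoc]
      exact mul_le_mul_of_nonneg_left (adjoint_norm_le _ ρ (hL u) t) (by positivity)
  obtain ⟨n, hn⟩ := exists_pow_lt_of_lt_one (show 0 < η / (‖t‖ + 1) by positivity) hρ1
  rw [lt_div_iff₀ (by positivity)] at hn
  refine main n t (lt_of_le_of_lt ?_ hn)
  exact mul_le_mul_of_nonneg_left (by linarith) (by positivity)

/-! ### Part 4: geometry -/

lemma robust_nc (F : Finset V) (hF : affineSpan ℝ (F : Set V) = ⊤) :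
    ∃ c : ℝ, 0 < c ∧ ∀ W : AffineSubspace ℝ V, (W : Set V).Nonempty → W ≠ ⊤ →
      ∃ x ∈ F, c < Metric.infDist x (W : Set V) := by
  let g : V → ℝ := fun n => ∑ x ∈ F, ∑ y ∈ F, |inner ℝ n (x - y)|
  have hg : Continuous g := by fun_prop
  have hpos : ∀ n ∈ Metric.sphere (0 : V) 1, 0 < g n := by
    intro n hn
    have h0 : 0 ≤ g n := Finset.sum_nonneg fun x _ => Finset.sum_nonneg fun y _ => abs_nonneg _
    refine lt_of_le_of_ne h0 fun hz => ?_
    have hz1 : ∀ x ∈ F, ∀ y ∈ F, inner ℝ n (x - y) = 0 := by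
      intro x hx y hy
      have h1 := (Finset.sum_eq_zero_iff_of_nonneg
        (fun x _ => Finset.sum_nonneg fun y _ => abs_nonneg _)).mp hz.symm x hx
      have h2 := (Finset.sum_eq_zero_iff_of_nonneg (fun y _ => abs_nonneg _)).mp h1 y hy
      exact abs_eq_zero.mp h2
    have hdir : vectorSpan ℝ (F : Set V) = ⊤ := by
      rw [← direction_affineSpan, hF, AffineSubspace.direction_top]
    have hle : vectorSpan ℝ (F : Set V) ≤ (ℝ ∙ n)ᗮ := by
      rw [vectorSpan_def, Submodule.span_le]
      rintro v ⟨x, hx, y, hy, rfl⟩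
      rw [SetLike.mem_coe, Submodule.mem_orthogonal_singleton_iff_inner_right]
      exact hz1 x hx y hy
    rw [hdir] at hle
    have : n ∈ (ℝ ∙ n)ᗮ := hle trivial
    rw [Submodule.mem_orthogonal_singleton_iff_inner_right] at this
    rw [inner_self_eq_zero] at this
    rw [this] at hn
    simp at hn
  obtain ⟨g0, hg0, hmin⟩ : ∃ g0 : ℝ, 0 < g0 ∧ ∀ n ∈ Metric.sphere (0 : V) 1, g0 ≤ g n := by
    rcases (Metric.sphere (0 : V) 1).eq_empty_or_nonempty with h | h
    · exact ⟨1, one_pos, by simp [h]⟩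
    · obtain ⟨n, hn, hmin⟩ := (isCompact_sphere (0 : V) 1).exists_isMinOn h hg.continuousOn
      exact ⟨g n, hpos n hn, fun m hm => hmin hm⟩
  have hcard : 0 < 2 * (F.card : ℝ) ^ 2 + 1 := by positivity
  refine ⟨g0 / (2 * (F.card : ℝ) ^ 2 + 1), by positivity, ?_⟩
  set c := g0 / (2 * (F.card : ℝ) ^ 2 + 1) with hc
  have hc0 : 0 < c := by positivity
  intro W hW hW1
  by_contra! hcon
  obtain ⟨w0, hw0⟩ := hW
  have hdir : W.direction ≠ ⊤ := by
    intro h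
    exact hW1 ((AffineSubspace.direction_eq_top_iff_of_nonempty ⟨w0, hw0⟩).mp h)
  obtain ⟨v, hv, hv0⟩ := Submodule.exists_mem_ne_zero_of_ne_bot
    (fun h => hdir ((Submodule.orthogonal_eq_bot_iff).mp h))
  let n : V := ‖v‖⁻¹ • v
  have hn1 : ‖n‖ = 1 := by
    simp only [n, norm_smul, norm_inv, norm_norm]
    exact inv_mul_cancel₀ (norm_ne_zero_iff.mpr hv0)
  have hnW : ∀ w ∈ W, inner ℝ n (w - w0) = 0 := by
    intro w hw
    have h1 : w - w0 ∈ W.direction := AffineSubspace.vsub_mem_direction hw hw0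
    have h2 := Submodule.inner_left_of_mem_orthogonal h1 hv
    simp only [n, inner_smul_left, h2, mul_zero]
  have hx : ∀ x ∈ F, |inner ℝ n (x - w0)| ≤ c := by
    intro x hx
    refine le_trans ?_ (hcon x hx)
    refine (Metric.le_infDist ⟨w0, hw0⟩).mpr ?_
    intro w hw
    have h1 : inner ℝ n (x - w0) = inner ℝ n (x - w) := by
      have h2 := hnW w hw
      rw [inner_sub_right] at h2 ⊢
      rw [inner_sub_right]
      linarith
    rw [h1, dist_eq_norm]
    have h3 := abs_real_inner_le_norm n (x - w)
    rwa [hn1, one_mul] at h3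
  have h1 := hmin n (by simpa using hn1)
  have h2 : g n ≤ ∑ x ∈ F, ∑ y ∈ F, (2 * c) := by
    refine Finset.sum_le_sum fun x hxF => Finset.sum_le_sum fun y hyF => ?_
    have e : x - y = (x - w0) - (y - w0) := by abel
    rw [e, inner_sub_right]
    have := abs_sub (inner ℝ n (x - w0)) (inner ℝ n (y - w0))
    linarith [hx x hxF, hx y hyF]
  simp only [Finset.sum_const, nsmul_eq_mul] at h2
  have h3 : c * (2 * (F.card : ℝ) ^ 2 + 1) = g0 := by rw [hc]; field_simp
  nlinarith

lemma exists_finset_span (O : Set V) (hO : affineSpan ℝ O = ⊤) :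
    ∃ F : Finset V, (F : Set V) ⊆ O ∧ affineSpan ℝ (F : Set V) = ⊤ := by
  obtain ⟨t, ht, hs, hi⟩ := exists_affineIndependent ℝ V O
  have hfin : t.Finite := finite_set_of_fin_dim_affineIndependent ℝ hi
  refine ⟨hfin.toFinset, by simpa using ht, ?_⟩
  rw [hfin.coe_toFinset, hs, hO]

lemma exists_finset_robust (O : Set V) (hO : affineSpan ℝ O = ⊤)
    (hperf : ∀ y ∈ O, y ∈ closure (O \ {y})) :
    ∃ F : Finset V, (F : Set V) ⊆ O ∧ ∃ c : ℝ, 0 < c ∧ ∀ y : V, ∀ W : AffineSubspace ℝ V,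
      (W : Set V).Nonempty → W ≠ ⊤ → ∃ x ∈ F, x ≠ y ∧ c < Metric.infDist x (W : Set V) := by
  classical
  have hO' : ∀ y ∈ O, affineSpan ℝ (O \ {y}) = ⊤ := by
    intro y hy
    have hcl : IsClosed (affineSpan ℝ (O \ {y}) : Set V) :=
      AffineSubspace.closed_of_finiteDimensional _
    have h1 : y ∈ affineSpan ℝ (O \ {y}) :=
      closure_minimal (subset_affineSpan ℝ _) hcl (hperf y hy)
    rw [eq_top_iff, ← hO, affineSpan_le]
    intro x hx
    by_cases hxy : x = y
    · rw [hxy]; exact h1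
    · exact subset_affineSpan ℝ _ ⟨hx, hxy⟩
  have hFy : ∀ y, ∃ F : Finset V, (F : Set V) ⊆ O \ {y} ∧
      (y ∈ O → affineSpan ℝ (F : Set V) = ⊤) := by
    intro y
    by_cases hy : y ∈ O
    · obtain ⟨F, h1, h2⟩ := exists_finset_span _ (hO' y hy)
      exact ⟨F, h1, fun _ => h2⟩
    · exact ⟨∅, by simp, fun h => absurd h hy⟩
  choose Fy hFy1 hFy2 using hFy
  obtain ⟨F0, hF0, hF0s⟩ := exists_finset_span O hO
  obtain ⟨c0, hc0, hn0⟩ := robust_nc F0 hF0s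
  have hcy : ∀ y, ∃ c : ℝ, 0 < c ∧ (y ∈ O → ∀ W : AffineSubspace ℝ V, (W : Set V).Nonempty → W ≠ ⊤ →
      ∃ x ∈ Fy y, c < Metric.infDist x (W : Set V)) := by
    intro y
    by_cases hy : y ∈ O
    · obtain ⟨c, h1, h2⟩ := robust_nc _ (hFy2 y hy)
      exact ⟨c, h1, fun _ => h2⟩
    · exact ⟨1, one_pos, fun h => absurd h hy⟩
  choose cy hcy1 hcy2 using hcy
  obtain ⟨c, hc, hcm⟩ : ∃ c : ℝ, 0 < c ∧ c ≤ c0 ∧ ∀ y ∈ F0, c ≤ cy y := by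
    have hne : (insert c0 (F0.image cy)).Nonempty := Finset.insert_nonempty _ _
    refine ⟨(insert c0 (F0.image cy)).min' hne, ?_, ?_, ?_⟩
    · rw [Finset.lt_min'_iff]
      intro x hx
      rw [Finset.mem_insert, Finset.mem_image] at hx
      rcases hx with rfl | ⟨y, _, rfl⟩
      · exact hc0
      · exact hcy1 y
    · exact Finset.min'_le _ _ (Finset.mem_insert_self _ _)
    · intro y hy
      exact Finset.min'_le _ _ (Finset.mem_insert_of_mem (Finset.mem_image_of_mem _ hy))
  refine ⟨F0 ∪ F0.biUnion Fy, ?_, c, hc, ?_⟩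
  · intro x hx
    rw [SetLike.mem_coe, Finset.mem_union, Finset.mem_biUnion] at hx
    rcases hx with hx | ⟨y, _, hx⟩
    · exact hF0 hx
    · exact (hFy1 y hx).1
  · intro y W hW hW1
    by_cases hy : y ∈ F0
    · obtain ⟨x, hx, hxc⟩ := hcy2 y (hF0 hy) W hW hW1
      refine ⟨x, ?_, ?_, (hcm.2 y hy).trans_lt hxc⟩
      · exact Finset.mem_union_right _ (Finset.mem_biUnion.mpr ⟨y, hy, hx⟩)
      · exact (hFy1 y hx).2
    · obtain ⟨x, hx, hxc⟩ := hn0 W hW hW1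
      refine ⟨x, Finset.mem_union_left _ hx, ?_, hcm.1.trans_lt hxc⟩
      rintro rfl
      exact hy hx

lemma exists_weights {U : Type*} [Fintype U] (G : U → U → Prop) (hG : ∀ u, G u u) (p : U → ℝ)
    (hp : ∀ u, 0 < p u) (hp1 : ∑ u, p u = 1) :
    ∃ (q : U → ℝ) (ν : U → U → ℝ), (∀ u, 0 ≤ q u) ∧ ∑ u, q u = 1 ∧ (∀ i u, 0 ≤ ν i u) ∧
      (∀ i, ∑ u, ν i u = 1) ∧ (∀ u, ∑ i, q i * ν i u = p u) ∧ (∀ i u, 0 < ν i u ↔ G i u) := by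
  classical
  let N : U → ℝ := fun u => ∑ i, if G i u then 1 else 0
  have hN : ∀ u, 0 < N u := by
    intro u
    refine Finset.sum_pos' (fun i _ => by split_ifs <;> norm_num) ⟨u, Finset.mem_univ u, ?_⟩
    simp [hG u]
  let J : U → U → ℝ := fun i u => p u / N u * if G i u then 1 else 0
  have hJ0 : ∀ i u, 0 ≤ J i u := fun i u =>
    mul_nonneg (div_pos (hp u) (hN u)).le (by split_ifs <;> norm_num)
  have hJ : ∀ i u, 0 < J i u ↔ G i u := by
    intro i u
    have := div_pos (hp u) (hN u)
    by_cases h : G i u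
    · simp only [J, h, if_true, mul_one, iff_true]; exact this
    · simp [J, h]
  have hJs : ∀ u, ∑ i, J i u = p u := by
    intro u
    simp only [J]
    rw [← Finset.mul_sum]
    exact div_mul_cancel₀ _ (hN u).ne'
  let q : U → ℝ := fun i => ∑ u, J i u
  have hq : ∀ i, 0 < q i := fun i =>
    Finset.sum_pos' (fun u _ => hJ0 i u) ⟨i, Finset.mem_univ i, (hJ i i).mpr (hG i)⟩
  refine ⟨q, fun i u => J i u / q i, fun i => (hq i).le, ?_, ?_, ?_, ?_, ?_⟩
  · simp only [q]
    rw [Finset.sum_comm, ← hp1]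
    exact Finset.sum_congr rfl fun u _ => hJs u
  · exact fun i u => div_nonneg (hJ0 i u) (hq i).le
  · intro i
    rw [← Finset.sum_div]
    exact div_self (hq i).ne'
  · intro u
    rw [← hJs u]
    exact Finset.sum_congr rfl fun i _ => mul_div_cancel₀ _ (hq i).ne'
  · intro i u
    rw [← hJ i u]
    exact div_pos_iff_of_pos_right (hq i)

/-! ### Part 5: words and the assembly -/

/-- composition of affine maps along a word -/
def aw {A : Type*} (g : A → V →ᵃ[ℝ] V) : List A → V →ᵃ[ℝ] V
  | [] => AffineMap.id ℝ V
  | a :: l => (g a).comp (aw g l)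

lemma aw_append {A : Type*} (g : A → V →ᵃ[ℝ] V) (l l' : List A) (x : V) :
    aw g (l ++ l') x = aw g l (aw g l' x) := by
  induction l with
  | nil => rfl
  | cons a l ih => simp only [List.cons_append, aw, AffineMap.comp_apply, ih]

lemma aw_dist {A : Type*} (g : A → V →ᵃ[ℝ] V) (r : A → ℝ)
    (hg : ∀ a x y, dist (g a x) (g a y) = r a * dist x y) (l : List A) (x y : V) :
    dist (aw g l x) (aw g l y) = (l.map r).prod * dist x y := by
  induction l with
  | nil => simp [aw]
  | cons a l ih => simp only [aw, AffineMap.comp_apply, hg, ih, List.map_cons, List.prod_cons, mul_assoc]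

lemma list_prod_pos {A : Type*} (r : A → ℝ) (h : ∀ a, 0 < r a) (l : List A) :
    0 < (l.map r).prod := by
  induction l with
  | nil => simp
  | cons a l ih => simpa using mul_pos (h a) ih

lemma list_prod_le {A : Type*} (r : A → ℝ) (ρ : ℝ) (h : ∀ a, 0 < r a) (hρ : ∀ a, r a ≤ ρ)
    (l : List A) : (l.map r).prod ≤ ρ ^ l.length := by
  induction l with
  | nil => simp
  | cons a l ih =>
    rw [List.map_cons, List.prod_cons, List.length_cons, pow_succ, mul_comm]
    exact mul_le_mul ih (hρ a) (h a).le ((list_prod_pos r h l).le.trans ih)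

lemma aw_fix {A : Type*} (g : A → V →ᵃ[ℝ] V) (a : A) (z : V) (hz : g a z = z) (k : ℕ) :
    aw g (List.replicate k a) z = z := by
  induction k with
  | zero => rfl
  | succ k ih => rw [List.replicate_succ, aw, AffineMap.comp_apply, ih, hz]

lemma aw_norm {A : Type*} (g : A → V →ᵃ[ℝ] V) (R : ℝ) (h : ∀ a x, ‖x‖ ≤ R → ‖g a x‖ ≤ R)
    (l : List A) (x : V) (hx : ‖x‖ ≤ R) : ‖aw g l x‖ ≤ R := by
  induction l with
  | nil => exact hx
  | cons a l ih => exact h a _ ih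

lemma sum_words {A : Type*} [Fintype A] (p : A → ℝ) (hp1 : ∑ a, p a = 1) (m : ℕ) :
    ∑ u : Fin m → A, ((List.ofFn u).map p).prod = 1 := by
  induction m with
  | zero => simp
  | succ m ih =>
    rw [← (Fin.consEquiv (fun _ : Fin (m + 1) => A)).sum_comp, Fintype.sum_prod_type]
    simp only [Fin.consEquiv, Equiv.coe_fn_mk, List.ofFn_succ, Fin.cons_zero, Fin.cons_succ,
      List.map_cons, List.prod_cons]
    simp_rw [← Finset.mul_sum, ih, mul_one, hp1]

lemma stat_words {A : Type*} [Fintype A] (g : A → V →ᵃ[ℝ] V) (p : A → ℝ) (hp : ∀ a, 0 < p a)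
    (μ : Measure V) (h : μ = ∑ a, ENNReal.ofReal (p a) • Measure.map (g a) μ) (m : ℕ) :
    ∀ S, MeasurableSet S → μ S = ∑ u : Fin m → A,
      ENNReal.ofReal ((List.ofFn u).map p).prod * μ (aw g (List.ofFn u) ⁻¹' S) := by
  induction m with
  | zero => intro S _; simp [aw]
  | succ m ih =>
    intro S hS
    have hm : ∀ a, Measurable (g a) := fun a => (g a).continuous_of_finiteDimensional.measurable
    conv_lhs => rw [h]
    simp only [Measure.finsetSum_apply, Measure.smul_apply, smul_eq_mul]
    rw [← (Fin.consEquiv (fun _ : Fin (m + 1) => A)).sum_comp, Fintype.sum_prod_type]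
    refine Finset.sum_congr rfl fun a _ => ?_
    rw [Measure.map_apply (hm a) hS, ih _ (hm a hS), Finset.mul_sum]
    refine Finset.sum_congr rfl fun u _ => ?_
    simp only [Fin.consEquiv, Equiv.coe_fn_mk, List.ofFn_succ, Fin.cons_zero, Fin.cons_succ,
      List.map_cons, List.prod_cons, aw]
    rw [ENNReal.ofReal_mul (hp a).le, mul_assoc]
    rfl

lemma exists_word {A : Type*} (l : List A) (m : ℕ) (h : l.length = m) :
    ∃ u : Fin m → A, List.ofFn u = l := by
  subst h
  exact ⟨l.get, List.ofFn_get l⟩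

/-- existence of the Moran data -/
theorem exists_moran {A : Type} [Fintype A] [Nonempty A] (g : A → V →ᵃ[ℝ] V) (r : A → ℝ)
    (hr0 : ∀ a, 0 < r a) (hr1 : ∀ a, r a < 1)
    (hg : ∀ a x y, dist (g a x) (g a y) = r a * dist x y)
    (hirr : ∀ W : AffineSubspace ℝ V, (W : Set V).Nonempty → (∀ a, ∀ x ∈ W, g a x ∈ W) → W = ⊤)
    (a₁ a₂ : A) (z z₂ : V) (hz : g a₁ z = z) (hz₂ : g a₂ z₂ = z₂) (hzz : z ≠ z₂)
    (p : A → ℝ) (hp : ∀ a, 0 < p a) (hp1 : ∑ a, p a = 1) :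
    ∃ (m : ℕ) (D : Moran V (Fin m → A)) (q : (Fin m → A) → ℝ),
      (∀ u, D.f u = aw g (List.ofFn u)) ∧ (∀ u, 0 ≤ q u) ∧ ∑ u, q u = 1 ∧
      (∀ u, ∑ i, q i * D.ν i u = ((List.ofFn u).map p).prod) := by
  classical
  obtain ⟨am, ham⟩ := Finite.exists_max r
  set ρ := r am with hρdef
  have hρ0 : 0 < ρ := hr0 am
  have hρ1 : ρ < 1 := hr1 am
  -- the invariant ball
  obtain ⟨R, hR0, hR, hzR⟩ : ∃ R : ℝ, 0 < R ∧ (∀ a x, ‖x‖ ≤ R → ‖g a x‖ ≤ R) ∧ ‖z‖ ≤ R := by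
    set M := ∑ a, ‖g a 0‖ with hM
    have hM0 : 0 ≤ M := Finset.sum_nonneg fun a _ => norm_nonneg _
    have hMa : ∀ a, ‖g a 0‖ ≤ M := fun a =>
      Finset.single_le_sum (f := fun a => ‖g a 0‖) (fun a _ => norm_nonneg _) (Finset.mem_univ a)
    have h1ρ : 0 < 1 - ρ := by linarith
    have hb : ∀ a x, ‖g a x‖ ≤ M + ρ * ‖x‖ := by
      intro a x
      have h1 := hg a x 0
      rw [dist_eq_norm, dist_zero_right] at h1
      have h2 : ‖g a x‖ ≤ ‖g a x - g a 0‖ + ‖g a 0‖ := by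
        have := norm_add_le (g a x - g a 0) (g a 0)
        rwa [sub_add_cancel] at this
      have h3 := mul_le_mul_of_nonneg_right (ham a) (norm_nonneg x)
      linarith [hMa a]
    have hRe : (M + 1) / (1 - ρ) * (1 - ρ) = M + 1 := div_mul_cancel₀ _ h1ρ.ne'
    refine ⟨(M + 1) / (1 - ρ), by positivity, ?_, ?_⟩
    · intro a x hx
      have := mul_le_mul_of_nonneg_left hx hρ0.le
      linarith [hb a x]
    · have := hb a₁ z
      rw [hz] at this
      rw [le_div_iff₀ h1ρ]
      linarith
  have hawd := aw_dist g r hg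
  -- the orbit
  set O : Set V := Set.range (fun l => aw g l z) with hO
  have hOspan : affineSpan ℝ O = ⊤ := by
    refine hirr _ ?_ ?_
    · exact ⟨z, subset_affineSpan ℝ _ ⟨[], rfl⟩⟩
    · intro a x hx
      have h1 : affineSpan ℝ O ≤ (affineSpan ℝ O).comap (g a) := by
        rw [affineSpan_le]
        rintro _ ⟨l, rfl⟩
        exact subset_affineSpan ℝ _ ⟨a :: l, rfl⟩
      exact h1 hx
  have hz' : g a₂ z ≠ z := by
    intro h
    have h1 := hg a₂ z z₂
    rw [h, hz₂] at h1
    have h2 := dist_pos.mpr hzz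
    nlinarith [hr1 a₂]
  have hperf : ∀ y ∈ O, y ∈ closure (O \ {y}) := by
    rintro _ ⟨l, rfl⟩
    rw [Metric.mem_closure_iff]
    intro c hc
    set K := (l.map r).prod * dist z (g a₂ z) with hK
    have hlp := list_prod_pos r hr0 l
    have hdp : 0 < dist z (g a₂ z) := dist_pos.mpr hz'.symm
    have hK0 : 0 < K := mul_pos hlp hdp
    obtain ⟨k, hk⟩ := exists_pow_lt_of_lt_one (div_pos hc hK0) (hr1 a₁)
    rw [lt_div_iff₀ hK0] at hk
    have hd : dist (aw g l z) (aw g (l ++ (List.replicate k a₁ ++ [a₂])) z) = r a₁ ^ k * K := by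
      rw [aw_append, aw_append, hawd]
      nth_rewrite 1 [← aw_fix g a₁ z hz k]
      rw [hawd, List.map_replicate, List.prod_replicate, hK]
      simp only [aw, AffineMap.comp_apply, AffineMap.id_apply]
      ring
    refine ⟨aw g (l ++ (List.replicate k a₁ ++ [a₂])) z, ⟨⟨_, rfl⟩, ?_⟩, by rw [hd]; exact hk⟩
    intro h
    rw [Set.mem_singleton_iff] at h
    rw [h, dist_self] at hd
    have := mul_pos (pow_pos (hr0 a₁) k) hK0
    linarith
  obtain ⟨F, hFO, c, hc, hnc⟩ := exists_finset_robust O hOspan hperf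
  obtain ⟨δ, hδ, hδF⟩ : ∃ δ : ℝ, 0 < δ ∧ ∀ x ∈ F, ∀ y ∈ F, x ≠ y → 4 * δ ≤ dist x y := by
    by_cases hne : F.offDiag.Nonempty
    · obtain ⟨w, hw, hmin⟩ := Finset.exists_min_image F.offDiag (fun w => dist w.1 w.2) hne
      have := dist_pos.mpr (Finset.mem_offDiag.mp hw).2.2
      refine ⟨dist w.1 w.2 / 4, by positivity, ?_⟩
      intro x hx y hy hxy
      have := hmin (x, y) (Finset.mem_offDiag.mpr ⟨hx, hy, hxy⟩)
      simp only at this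
      linarith
    · refine ⟨1, one_pos, fun x hx y hy hxy => absurd ?_ hne⟩
      exact ⟨(x, y), Finset.mem_offDiag.mpr ⟨hx, hy, hxy⟩⟩
  have hword : ∀ x, ∃ l, x ∈ F → aw g l z = x := by
    intro x
    by_cases hx : x ∈ F
    · obtain ⟨l, hl⟩ := hFO hx
      exact ⟨l, fun _ => hl⟩
    · exact ⟨[], fun h => absurd h hx⟩
  choose lw hlw using hword
  set η := min (δ / 2) (c / 2) with hη
  have hη0 : 0 < η := by positivity
  obtain ⟨n, hn⟩ := exists_pow_lt_of_lt_one (show 0 < η / (2 * R) by positivity) hρ1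
  rw [lt_div_iff₀ (by positivity)] at hn
  set m := n + F.sup (fun x => (lw x).length) + 1 with hm
  have hlen : ∀ x ∈ F, (lw x).length ≤ m := by
    intro x hx
    have := Finset.le_sup (f := fun x => (lw x).length) hx
    omega
  have hbw : ∀ x, ∃ u : Fin m → A, x ∈ F → aw g (List.ofFn u) z = x := by
    intro x
    by_cases hx : x ∈ F
    · obtain ⟨u, hu⟩ := exists_word (lw x ++ List.replicate (m - (lw x).length) a₁) m (by
        rw [List.length_append, List.length_replicate]
        have := hlen x hx
        omega)
      refine ⟨u, fun _ => ?_⟩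
      rw [hu, aw_append, aw_fix g a₁ z hz, hlw x hx]
    · exact ⟨fun _ => a₁, fun h => absurd h hx⟩
  choose b hb using hbw
  have hpm : ρ ^ m * (2 * R) ≤ η := by
    have : ρ ^ m ≤ ρ ^ n := pow_le_pow_of_le_one hρ0.le hρ1.le (by omega)
    nlinarith
  have hpiece : ∀ (u : Fin m → A) x, ‖x‖ ≤ R →
      dist (aw g (List.ofFn u) x) (aw g (List.ofFn u) z) ≤ η := by
    intro u x hx
    rw [hawd]
    have h1 := list_prod_le r ρ hr0 ham (List.ofFn u)
    rw [List.length_ofFn] at h1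
    have h2 : dist x z ≤ 2 * R := by
      rw [dist_eq_norm]
      linarith [norm_sub_le x z]
    exact (mul_le_mul h1 h2 dist_nonneg (by positivity)).trans hpm
  have hη1 : η ≤ δ / 2 := min_le_left _ _
  have hη2 : η ≤ c / 2 := min_le_right _ _
  let G : (Fin m → A) → (Fin m → A) → Prop := fun i u =>
    u = i ∨ ∃ x ∈ F, u = b x ∧ 2 * δ ≤ dist x (aw g (List.ofFn i) z)
  obtain ⟨q, ν, hq0, hq1, hν0, hν1, hqν, hνG⟩ := exists_weights G (fun u => Or.inl rfl)
    (fun u : Fin m → A => ((List.ofFn u).map p).prod) (fun u => list_prod_pos p hp _)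
    (sum_words p hp1 m)
  refine ⟨m, ⟨fun u => aw g (List.ofFn u), fun u => ((List.ofFn u).map r).prod, R, δ, c / 2, ν,
    fun u => list_prod_pos r hr0 _, ?_, fun u => hawd _, hR0, fun u x => aw_norm g R hR _ x,
    hν0, hν1, hδ, ?_, by positivity, ?_⟩, q, fun u => rfl, hq0, hq1, hqν⟩
  · intro u
    have h1 := list_prod_le r ρ hr0 ham (List.ofFn u)
    rw [List.length_ofFn] at h1
    exact h1.trans_lt (pow_lt_one₀ hρ0.le hρ1 (by omega))
  · intro i u v huv hu hv x y hx hy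
    rw [hνG] at hu hv
    have key : 2 * δ ≤ dist (aw g (List.ofFn u) z) (aw g (List.ofFn v) z) := by
      rcases hu with rfl | ⟨s, hs, rfl, hsd⟩
      · rcases hv with rfl | ⟨t, ht, rfl, htd⟩
        · exact absurd rfl huv
        · rw [hb t ht, dist_comm]
          exact htd
      · rw [hb s hs]
        rcases hv with rfl | ⟨t, ht, rfl, htd⟩
        · exact hsd
        · rw [hb t ht]
          have hst : s ≠ t := by
            rintro rfl
            exact huv rfl
          linarith [hδF s hs t ht hst]
    have h1 := hpiece u x hx
    have h2 := hpiece v y hy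
    have h3 := dist_triangle4 (aw g (List.ofFn u) z) (aw g (List.ofFn u) x)
      (aw g (List.ofFn v) y) (aw g (List.ofFn v) z)
    rw [dist_comm (aw g (List.ofFn u) z) (aw g (List.ofFn u) x)] at h3
    linarith
  · intro i W hW hW1
    obtain ⟨y, hy⟩ : ∃ y : V, ∀ x ∈ F, x ≠ y → 2 * δ ≤ dist x (aw g (List.ofFn i) z) := by
      by_cases h : ∃ y ∈ F, dist y (aw g (List.ofFn i) z) < 2 * δ
      · obtain ⟨y, hyF, hyd⟩ := h
        refine ⟨y, fun x hx hxy => ?_⟩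
        have h1 := hδF x hx y hyF hxy
        have h2 := dist_triangle_right x y (aw g (List.ofFn i) z)
        linarith
      · push Not at h
        exact ⟨0, fun x hx _ => h x hx⟩
    obtain ⟨x, hxF, hxy, hxW⟩ := hnc y W hW hW1
    refine ⟨b x, (hνG _ _).mpr (Or.inr ⟨x, hxF, rfl, hy x hxF hxy⟩), ?_⟩
    intro t ht
    have h1 := hpiece (b x) t ht
    rw [hb x hxF, dist_comm] at h1
    have h2 := Metric.infDist_le_infDist_add_dist (s := (W : Set V)) (x := x)
      (y := aw g (List.ofFn (b x)) t)
    linarith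

theorem core {A : Type} [Fintype A] [Nonempty A] (g : A → V →ᵃ[ℝ] V) (r : A → ℝ)
    (hr0 : ∀ a, 0 < r a) (hr1 : ∀ a, r a < 1)
    (hg : ∀ a x y, dist (g a x) (g a y) = r a * dist x y)
    (hirr : ∀ W : AffineSubspace ℝ V, (W : Set V).Nonempty → (∀ a, ∀ x ∈ W, g a x ∈ W) → W = ⊤)
    (a₁ a₂ : A) (z z₂ : V) (hz : g a₁ z = z) (hz₂ : g a₂ z₂ = z₂) (hzz : z ≠ z₂)
    (p : A → ℝ) (hp : ∀ a, 0 < p a) (hp1 : ∑ a, p a = 1)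
    (μ : Measure V) [IsProbabilityMeasure μ]
    (hstat : μ = ∑ a, ENNReal.ofReal (p a) • Measure.map (g a) μ) :
    ∃ (Ω : Type) (_ : MeasurableSpace Ω) (ℙ : Measure Ω) (_ : IsProbabilityMeasure ℙ)
      (μω : Ω → Measure V),
      (∀ ω, IsProbabilityMeasure (μω ω)) ∧
      (∀ S : Set V, MeasurableSet S → Measurable fun ω => μω ω S) ∧
      (∀ S : Set V, MeasurableSet S → μ S = ∫⁻ ω, μω ω S ∂ℙ) ∧
      ∃ C₁ C₂ α : ℝ, 0 < C₁ ∧ 0 < C₂ ∧ 0 < α ∧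
        (∀ ω, ∀ x ∈ msupport (μω ω), ∀ r : ℝ, 0 < r →
          μω ω (Metric.closedBall x (2 * r)) ≤
            ENNReal.ofReal C₁ * μω ω (Metric.closedBall x r)) ∧
        (∀ ω, ∀ x ∈ msupport (μω ω), ∀ W : AffineSubspace ℝ V,
          (W : Set V).Nonempty → W ≠ ⊤ → ∀ r ε : ℝ,
          0 < r → r ≤ 1 → 0 < ε →
          μω ω (affNbhd W (ε * r) ∩ Metric.closedBall x r) ≤
            ENNReal.ofReal (C₂ * ε ^ α) * μω ω (Metric.closedBall x r)) := by
  obtain ⟨m, D, q, hDf, hq0, hq1, hqν⟩ :=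
    exists_moran g r hr0 hr1 hg hirr a₁ a₂ z z₂ hz hz₂ hzz p hp hp1
  letI : MeasurableSpace (Fin m → A) := ⊤
  haveI : DiscreteMeasurableSpace (Fin m → A) := ⟨fun _ => trivial⟩
  have hqp : IsProbabilityMeasure (wm q) := wm_prob q hq0 hq1
  obtain ⟨ρ, rm, κ, hrm0, hrm1, hρ0, hρ1, hκ0, hκ1, hrr, hρ, hκ⟩ := D.exists_consts
  have havg : μ = avg D q := by
    have : IsProbabilityMeasure (avg D q) :=
      Measure.isProbabilityMeasure_map (measurable_code_sel D).aemeasurable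
    refine stat_unique D.f (fun u => ((List.ofFn u).map p).prod)
      (fun u => (list_prod_pos p hp _).le) (sum_words p hp1 m) ρ hρ0 hρ1 ?_ μ (avg D q) ?_
      (avg_stat D q hq0 hq1 _ hqν)
    · intro u x y
      rw [D.dist_f]
      exact mul_le_mul_of_nonneg_right (hρ u) dist_nonneg
    · ext S hS
      rw [stat_words g p hp μ hstat m S hS]
      simp only [Measure.finsetSum_apply, Measure.smul_apply, smul_eq_mul]
      refine Finset.sum_congr rfl fun u _ => ?_
      rw [Measure.map_apply (D.cont u).measurable hS, hDf]
  obtain ⟨C₁, C₂, α, hC₁, hC₂, hα, h1, h2⟩ := (rfam D).main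
  have hprob := rmeas_prob D
  have conv : ∀ (ω : ℕ → Fin m → A) (S T : Set V) (c : ℝ), 0 ≤ c →
      (rmeas D ω).real S ≤ c * (rmeas D ω).real T →
      rmeas D ω S ≤ ENNReal.ofReal c * rmeas D ω T := by
    intro ω S T c hc h
    have h3 := ENNReal.ofReal_le_ofReal h
    rw [ENNReal.ofReal_mul hc, ofReal_measureReal, ofReal_measureReal] at h3
    exact h3
  refine ⟨ℕ → Fin m → A, inferInstance, Measure.infinitePi (fun _ => wm q), inferInstance, rmeas D,
    rmeas_prob D, rmeas_measurable D, ?_, C₁, C₂, α, hC₁, hC₂, hα, ?_, ?_⟩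
  · intro S hS
    rw [← avg_apply D q S hS, ← havg]
  · intro ω x hx t ht
    exact conv ω _ _ _ hC₁.le (h1 ω x hx t ht)
  · intro ω x hx W hW hW1 t ε ht ht1 hε
    exact conv ω _ _ _ (by positivity) (h2 ω x hx W hW hW1 t ε ht ht1 hε)

/-- similarities are affine -/
lemma exists_affine (r : ℝ) (f : V → V) (h : IsSimilarityWith r f) :
    ∃ g : V →ᵃ[ℝ] V, (g : V → V) = f := by
  obtain ⟨hr0, hr1, hf⟩ := h
  have hi : Isometry (fun x => r⁻¹ • f x) := by
    refine Isometry.of_dist_eq fun x y => ?_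
    rw [dist_eq_norm, ← smul_sub, norm_smul, hf, norm_inv, Real.norm_of_nonneg hr0.le, dist_eq_norm,
      inv_mul_cancel_left₀ hr0.ne']
  refine ⟨r • (hi.affineIsometryOfStrictConvexSpace).toAffineMap, ?_⟩
  ext x
  simp [hr0.ne']

end Helpers

/-- Theorem 2 (self-similar disintegration). -/
theorem self_similar_disintegration
    (d : ℕ) {A : Type*} [Fintype A]
    (φ : A → EuclideanSpace ℝ (Fin d) → EuclideanSpace ℝ (Fin d))
    (hΦ : IsSelfSimilarIFS φ) (hirr : AffinelyIrreducible φ)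
    (p : A → ℝ) (hp : ∀ a, 0 < p a) (hp1 : ∑ a, p a = 1)
    (μ : Measure (EuclideanSpace ℝ (Fin d))) [IsProbabilityMeasure μ]
    (hstat : μ = ∑ a, ENNReal.ofReal (p a) • Measure.map (φ a) μ) :
    ∃ (Ω : Type) (_ : MeasurableSpace Ω) (ℙ : Measure Ω) (_ : IsProbabilityMeasure ℙ)
      (μω : Ω → Measure (EuclideanSpace ℝ (Fin d))),
      (∀ ω, IsProbabilityMeasure (μω ω)) ∧
      (∀ S : Set (EuclideanSpace ℝ (Fin d)), MeasurableSet S →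
        Measurable fun ω => μω ω S) ∧
      (∀ S : Set (EuclideanSpace ℝ (Fin d)), MeasurableSet S →
        μ S = ∫⁻ ω, μω ω S ∂ℙ) ∧
      ∃ C₁ C₂ α : ℝ, 0 < C₁ ∧ 0 < C₂ ∧ 0 < α ∧
        (∀ ω, ∀ x ∈ msupport (μω ω), ∀ r : ℝ, 0 < r →
          μω ω (Metric.closedBall x (2 * r)) ≤
            ENNReal.ofReal C₁ * μω ω (Metric.closedBall x r)) ∧
        (∀ ω, ∀ x ∈ msupport (μω ω), ∀ W : AffineSubspace ℝ (EuclideanSpace ℝ (Fin d)),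
          (W : Set (EuclideanSpace ℝ (Fin d))).Nonempty → W ≠ ⊤ → ∀ r ε : ℝ,
          0 < r → r ≤ 1 → 0 < ε →
          μω ω (affNbhd W (ε * r) ∩ Metric.closedBall x r) ≤
            ENNReal.ofReal (C₂ * ε ^ α) * μω ω (Metric.closedBall x r)) := by
  obtain ⟨hcard, hsim, a₁, a₂, x₁, x₂, h1, h2, hne⟩ := hΦ
  choose r hr using hsim
  choose g hg using fun a => exists_affine (r a) (φ a) (hr a)
  have e : Fin (Fintype.card A) ≃ A := (Fintype.equivFin A).symm
  have hnon : Nonempty (Fin (Fintype.card A)) := ⟨e.symm a₁⟩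
  refine core (A := Fin (Fintype.card A)) (fun i => g (e i)) (fun i => r (e i))
    (fun i => (hr _).1) (fun i => (hr _).2.1) ?_ ?_ (e.symm a₁) (e.symm a₂) x₁ x₂ ?_ ?_ hne
    (fun i => p (e i)) (fun i => hp _) ?_ μ ?_
  · intro i x y
    simp only [hg, dist_eq_norm]
    exact (hr _).2.2 x y
  · intro W hW hinv
    by_contra hWt
    refine hirr ⟨W, hW, hWt, fun a => ?_⟩
    rintro _ ⟨x, hx, rfl⟩
    have := hinv (e.symm a) x hx
    simpa [hg] using this
  · simp only [Equiv.apply_symm_apply, hg]; exact h1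
  · simp only [Equiv.apply_symm_apply, hg]; exact h2
  · rw [e.sum_comp p]; exact hp1
  · simp only [hg]
    rw [e.sum_comp (fun a => ENNReal.ofReal (p a) • Measure.map (φ a) μ)]
    exact hstat
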